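/- Assume ρ is first order separable, i.e. ρ(y,u)·E(N) = ρ₁(y)ρ₂(u) for all (y,u). Then the following are equivalent: (i) there exist measurable functions k₁ : ℝ^d×ℝ^d → [0,∞) and k₂ : S^k×S^k → [0,∞) such that g(y₁,u₁,y₂,u₂) = k₁(y₁,y₂)·k₂(u₁,u₂) whenever ρ(y₁,u₁)ρ(y₂,u₂) > 0 (second order separability); (ii) g(y₁,u₁,y₂,u₂) = β·g₁(y₁,y₂)·g₂(u₁,u₂) whenever ρ(y₁,u₁)ρ(y₂,u₂) > 0. -/

import Mathlib

open MeasureTheory Real Set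
open scoped ENNReal NNReal RealInnerProductSpace Classical

noncomputable section

/-- `d`-dimensional Euclidean space. -/
abbrev Eucl (d : ℕ) : Type := EuclideanSpace ℝ (Fin d)

/-- The unit `k`-sphere in `ℝ^{k+1}`. -/
abbrev Sph (k : ℕ) : Type := Metric.sphere (0 : EuclideanSpace ℝ (Fin (k+1))) 1

/-- The surface measure `ν` on the `k`-sphere: the `k`-dimensional Hausdorff measure. -/
noncomputable def sphMeasure (k : ℕ) : Measure (Sph k) := μH[k]

/-- The geodesic distance `d(u,v) = arccos ⟨u,v⟩` on the `k`-sphere. -/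
noncomputable def gd {k : ℕ} (u v : Sph k) : ℝ :=
  Real.arccos ⟪(u : EuclideanSpace ℝ (Fin (k+1))), (v : EuclideanSpace ℝ (Fin (k+1)))⟫

variable {d k : ℕ}

/-- The product measure `μ` on `ℝ^d × S^k` restricted to `W × S^k`. -/
noncomputable def muW (W : Set (Eucl d)) (k : ℕ) : Measure (Eucl d × Sph k) :=
  ((volume : Measure (Eucl d)).restrict W).prod (sphMeasure k)

/-- Marginal spatial intensity `ρ₁(y) = ∫_{S^k} ρ(y,u) dν(u)`. -/
noncomputable def rho1 (ρ : Eucl d × Sph k → ℝ≥0) (y : Eucl d) : ℝ≥0∞ :=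
  ∫⁻ u, (ρ (y, u) : ℝ≥0∞) ∂(sphMeasure k)

/-- Marginal spherical intensity `ρ₂(u) = ∫_W ρ(y,u) dy`. -/
noncomputable def rho2 (W : Set (Eucl d)) (ρ : Eucl d × Sph k → ℝ≥0) (u : Sph k) : ℝ≥0∞ :=
  ∫⁻ y in W, (ρ (y, u) : ℝ≥0∞)

/-- The expected number of points `E(N) = ∫_{W × S^k} ρ dμ`. -/
noncomputable def meanN (W : Set (Eucl d)) (ρ : Eucl d × Sph k → ℝ≥0) : ℝ≥0∞ :=
  ∫⁻ p, (ρ p : ℝ≥0∞) ∂(muW W k)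

/-- The pair correlation function `g₁` of the spatial components. -/
noncomputable def gfun1 (ρ : Eucl d × Sph k → ℝ≥0)
    (g : Eucl d × Sph k → Eucl d × Sph k → ℝ≥0) (y₁ y₂ : Eucl d) : ℝ≥0∞ :=
  if 0 < rho1 ρ y₁ * rho1 ρ y₂ then
    (∫⁻ u₁, (∫⁻ u₂, ((ρ (y₁, u₁) : ℝ≥0∞) * (ρ (y₂, u₂) : ℝ≥0∞) *
        (g (y₁, u₁) (y₂, u₂) : ℝ≥0∞)) ∂(sphMeasure k)) ∂(sphMeasure k))
      / (rho1 ρ y₁ * rho1 ρ y₂)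
  else 0

/-- The pair correlation function `g₂` of the spherical components. -/
noncomputable def gfun2 (W : Set (Eucl d)) (ρ : Eucl d × Sph k → ℝ≥0)
    (g : Eucl d × Sph k → Eucl d × Sph k → ℝ≥0) (u₁ u₂ : Sph k) : ℝ≥0∞ :=
  if 0 < rho2 W ρ u₁ * rho2 W ρ u₂ then
    (∫⁻ y₁ in W, ∫⁻ y₂ in W, ((ρ (y₁, u₁) : ℝ≥0∞) * (ρ (y₂, u₂) : ℝ≥0∞) *
        (g (y₁, u₁) (y₂, u₂) : ℝ≥0∞)))
      / (rho2 W ρ u₁ * rho2 W ρ u₂)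
  else 0

/-- The second factorial moment `E{N(N−1)}`. -/
noncomputable def momN2 (W : Set (Eucl d)) (ρ : Eucl d × Sph k → ℝ≥0)
    (g : Eucl d × Sph k → Eucl d × Sph k → ℝ≥0) : ℝ≥0∞ :=
  ∫⁻ p, (∫⁻ q, ((ρ p : ℝ≥0∞) * (ρ q : ℝ≥0∞) * (g p q : ℝ≥0∞)) ∂(muW W k)) ∂(muW W k)

/-- The constant `β = E(N)² / E{N(N−1)}`. -/
noncomputable def betaC (W : Set (Eucl d)) (ρ : Eucl d × Sph k → ℝ≥0)
    (g : Eucl d × Sph k → Eucl d × Sph k → ℝ≥0) : ℝ≥0∞ :=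
  (meanN W ρ) ^ 2 / momN2 W ρ g

theorem lip_normalize {E : Type*} [NormedAddCommGroup E] [NormedSpace ℝ E] (x y : E)
    (hx : 1 ≤ ‖x‖) (hy : 1 ≤ ‖y‖) : ‖‖x‖⁻¹ • x - ‖y‖⁻¹ • y‖ ≤ 2 * ‖x - y‖ := by
  have hx0 : 0 < ‖x‖ := by linarith
  have hy0 : 0 < ‖y‖ := by linarith
  have e : ‖x‖⁻¹ • x - ‖y‖⁻¹ • y = ‖x‖⁻¹ • (x - y) + (‖x‖⁻¹ - ‖y‖⁻¹) • y := by
    rw [smul_sub, sub_smul]; abel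
  rw [e]
  refine (norm_add_le _ _).trans ?_
  rw [norm_smul, norm_smul, norm_inv, norm_norm]
  have h1 : ‖x‖⁻¹ ≤ 1 := inv_le_one_of_one_le₀ hx
  have h2 : ‖‖x‖⁻¹ - ‖y‖⁻¹‖ * ‖y‖ = ‖x‖⁻¹ * |‖y‖ - ‖x‖| := by
    have : ‖x‖⁻¹ - ‖y‖⁻¹ = ‖x‖⁻¹ * ‖y‖⁻¹ * (‖y‖ - ‖x‖) := by field_simp
    rw [this, Real.norm_eq_abs, abs_mul, abs_of_pos (by positivity)]
    field_simp
  rw [h2]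
  have h3 : |‖y‖ - ‖x‖| ≤ ‖x - y‖ := by
    rw [norm_sub_rev]; exact abs_norm_sub_norm_le y x
  have h4 : ‖x‖⁻¹ * |‖y‖ - ‖x‖| ≤ 1 * ‖x - y‖ := by gcongr
  have h5 : ‖x‖⁻¹ * ‖x - y‖ ≤ 1 * ‖x - y‖ := by gcongr
  linarith

/-- Parametrization of a face of the cube. -/
def faceMap (k : ℕ) (i : Fin (k+1)) (s : ℝ) (v : Fin k → ℝ) : EuclideanSpace ℝ (Fin (k+1)) :=
  WithLp.toLp 2 (i.insertNth s v : Fin (k+1) → ℝ)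

theorem faceMap_lip (k : ℕ) (i : Fin (k+1)) (s : ℝ) :
    ∃ K : ℝ≥0, LipschitzWith K (faceMap k i s) := by
  have h := PiLp.lipschitzWith_toLp 2 (fun _ : Fin (k+1) => ℝ)
  refine ⟨_ * 1, h.comp (LipschitzWith.of_dist_le_mul fun v w => ?_)⟩
  rw [NNReal.coe_one, one_mul, dist_pi_le_iff dist_nonneg]
  intro j
  refine Fin.succAboveCases i ?_ (fun j => ?_) j
  · simp
  · simpa using dist_le_pi_dist v w j

theorem one_le_norm_faceMap (k : ℕ) (i : Fin (k+1)) (s : ℝ) (hs : |s| = 1) (v : Fin k → ℝ) :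
    1 ≤ ‖faceMap k i s v‖ := by
  have := PiLp.norm_apply_le (faceMap k i s v) i
  simpa [faceMap, hs] using this

theorem sphere_hausdorff_lt_top (k : ℕ) :
    (μH[k] : Measure (EuclideanSpace ℝ (Fin (k+1)))) (Metric.sphere 0 1) < ⊤ := by
  set C : Set (Fin k → ℝ) := Metric.closedBall 0 1
  let f : Fin (k+1) × Bool → (Fin k → ℝ) → EuclideanSpace ℝ (Fin (k+1)) := fun p v =>
    ‖faceMap k p.1 (if p.2 then 1 else -1) v‖⁻¹ • faceMap k p.1 (if p.2 then 1 else -1) v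
  have hs : ∀ b : Bool, |(if b then (1:ℝ) else -1)| = 1 := by intro b; cases b <;> simp
  have hcov : Metric.sphere (0 : EuclideanSpace ℝ (Fin (k+1))) 1 ⊆ ⋃ p, f p '' C := by
    intro x hx
    have hx1 : ‖x‖ = 1 := by simpa using hx
    obtain ⟨i, hi⟩ := Finite.exists_max (fun j => |x j|)
    have hxi : 0 < |x i| := by
      by_contra hc
      have h0 : x = 0 := by
        ext j
        have := hi j
        have h2 : |x j| = 0 := le_antisymm (by linarith) (abs_nonneg _)
        simpa using h2
      rw [h0] at hx1; simp at hx1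
    refine mem_iUnion.2 ⟨(i, decide (0 < x i)), fun j => |x i|⁻¹ * x (i.succAbove j), ?_, ?_⟩
    · simp only [C, mem_closedBall_zero_iff]
      rw [pi_norm_le_iff_of_nonneg zero_le_one]
      intro j
      rw [norm_mul, norm_inv, Real.norm_eq_abs, Real.norm_eq_abs, abs_abs, inv_mul_le_iff₀ hxi]
      simpa using hi _
    · have key : faceMap k i (if decide (0 < x i) = true then 1 else -1)
          (fun j => |x i|⁻¹ * x (i.succAbove j)) = |x i|⁻¹ • x := by
        ext j
        refine Fin.succAboveCases i ?_ (fun j => ?_) j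
        · simp only [faceMap, Fin.insertNth_apply_same, decide_eq_true_eq, PiLp.smul_apply,
            smul_eq_mul]
          split_ifs with h
          · rw [abs_of_pos h, inv_mul_cancel₀ h.ne']
          · have h' : x i < 0 := lt_of_le_of_ne (not_lt.1 h) (abs_pos.1 hxi)
            rw [abs_of_neg h', inv_neg, neg_mul, inv_mul_cancel₀ h'.ne]
        · simp [faceMap]
      simp only [f]
      rw [key, norm_smul, hx1, norm_inv, Real.norm_eq_abs, abs_abs, mul_one, inv_inv, smul_smul,
        mul_inv_cancel₀ hxi.ne', one_smul]
  refine (measure_mono hcov).trans_lt ?_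
  refine (measure_iUnion_le _).trans_lt ?_
  rw [tsum_fintype]
  refine ENNReal.sum_lt_top.2 fun p _ => ?_
  obtain ⟨K, hK⟩ := faceMap_lip k p.1 (if p.2 then 1 else -1)
  have hl : LipschitzWith (2 * K) (f p) := by
    refine LipschitzWith.of_dist_le_mul fun v w => ?_
    rw [dist_eq_norm]
    refine (lip_normalize _ _ (one_le_norm_faceMap k _ _ (hs _) v)
      (one_le_norm_faceMap k _ _ (hs _) w)).trans ?_
    have := hK.dist_le_mul v w
    rw [dist_eq_norm] at this
    push_cast
    linarith
  refine (hl.lipschitzOnWith.hausdorffMeasure_image_le (s := C) (Nat.cast_nonneg k)).trans_lt ?_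
  have hv : (μH[k] : Measure (Fin k → ℝ)) C < ⊤ := by
    have := hausdorffMeasure_pi_real (ι := Fin k)
    rw [Fintype.card_fin] at this
    rw [this]
    exact measure_closedBall_lt_top
  exact ENNReal.mul_lt_top (ENNReal.rpow_lt_top_of_nonneg (Nat.cast_nonneg k) ENNReal.coe_ne_top) hv

instance sphMeasure_finite (k : ℕ) : IsFiniteMeasure (sphMeasure k) := by
  constructor
  have h := (isometry_subtype_coe (s := Metric.sphere (0 : EuclideanSpace ℝ (Fin (k+1))) 1)
    ).hausdorffMeasure_image (d := k) (Or.inl (Nat.cast_nonneg k)) univ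
  rw [image_univ, Subtype.range_coe] at h
  rw [sphMeasure, ← h]
  exact sphere_hausdorff_lt_top k

/-- Under first order separability, second order separability
`g = k₁·k₂` (on `{ρ ⊗ ρ > 0}`) is equivalent to `g = β·g₁·g₂` (on `{ρ ⊗ ρ > 0}`). -/
theorem second_order_separability_iff (d k : ℕ) (hd : 1 ≤ d) (hk : 1 ≤ k)
    (W : Set (Eucl d)) (hWm : MeasurableSet W) (hWb : Bornology.IsBounded W)
    (ρ : Eucl d × Sph k → ℝ≥0) (hρ : Measurable ρ)
    (hEN₀ : 0 < meanN W ρ) (hEN₁ : meanN W ρ < ⊤)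
    (hsep1 : ∀ (y : Eucl d) (u : Sph k),
      (ρ (y, u) : ℝ≥0∞) * meanN W ρ = rho1 ρ y * rho2 W ρ u)
    (g : Eucl d × Sph k → Eucl d × Sph k → ℝ≥0)
    (hg : Measurable (Function.uncurry g))
    (hg0 : ∀ p q : Eucl d × Sph k, ρ p * ρ q = 0 → g p q = 0)
    (hN2₀ : 0 < momN2 W ρ g) (hN2₁ : momN2 W ρ g < ⊤) :
    (∃ (k₁ : Eucl d → Eucl d → ℝ≥0) (k₂ : Sph k → Sph k → ℝ≥0),
        Measurable (Function.uncurry k₁) ∧ Measurable (Function.uncurry k₂) ∧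
        ∀ (y₁ y₂ : Eucl d) (u₁ u₂ : Sph k), 0 < ρ (y₁, u₁) * ρ (y₂, u₂) →
          g (y₁, u₁) (y₂, u₂) = k₁ y₁ y₂ * k₂ u₁ u₂) ↔
      (∀ (y₁ y₂ : Eucl d) (u₁ u₂ : Sph k), 0 < ρ (y₁, u₁) * ρ (y₂, u₂) →
        (g (y₁, u₁) (y₂, u₂) : ℝ≥0∞) =
          betaC W ρ g * gfun1 ρ g y₁ y₂ * gfun2 W ρ g u₁ u₂) := by
  have hρ' : Measurable fun p => (ρ p : ℝ≥0∞) := hρ.coe_nnreal_ennreal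
  have ha : Measurable (rho1 ρ) := hρ'.lintegral_prod_right'
  have hb : Measurable (rho2 W ρ) := hρ'.lintegral_prod_left'
  set m := meanN W ρ with hm
  have hm0 : m ≠ 0 := hEN₀.ne'
  have hmt : m ≠ ⊤ := hEN₁.ne
  have hma : m = ∫⁻ y in W, rho1 ρ y := by
    rw [hm, meanN, muW, lintegral_prod _ hρ'.aemeasurable]; rfl
  have hmb : m = ∫⁻ u, rho2 W ρ u ∂(sphMeasure k) := by
    rw [hm, meanN, muW, lintegral_prod_symm _ hρ'.aemeasurable]; rfl
  have hat : ∀ y, rho1 ρ y ≠ ⊤ := by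
    intro y hy
    apply hm0
    rw [hmb]
    have : ∀ u, rho2 W ρ u = 0 := by
      intro u
      by_contra hu
      have h := hsep1 y u
      rw [hy, ENNReal.top_mul hu] at h
      exact ENNReal.mul_ne_top ENNReal.coe_ne_top hmt h
    simp [this]
  have hbt : ∀ u, rho2 W ρ u ≠ ⊤ := by
    intro u hu
    apply hm0
    rw [hma]
    have : ∀ y, rho1 ρ y = 0 := by
      intro y
      by_contra hy
      have h := hsep1 y u
      rw [hu, ENNReal.mul_top hy] at h
      exact ENNReal.mul_ne_top ENNReal.coe_ne_top hmt h
    simp [this]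
  have hG : Measurable fun r : (Eucl d × Sph k) × (Eucl d × Sph k) =>
      (ρ r.1 : ℝ≥0∞) * (ρ r.2 : ℝ≥0∞) * (g r.1 r.2 : ℝ≥0∞) :=
    ((hρ'.comp measurable_fst).mul (hρ'.comp measurable_snd)).mul hg.coe_nnreal_ennreal
  constructor
  · rintro ⟨k₁, k₂, hk₁, hk₂, hgk⟩
    set a := rho1 ρ
    set b := rho2 W ρ
    have hρab : ∀ y u, (ρ (y, u) : ℝ≥0∞) = m⁻¹ * (a y * b u) := by
      intro y u
      rw [← hsep1 y u, mul_comm _ m, ← mul_assoc, ENNReal.inv_mul_cancel hm0 hmt, one_mul]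
    have hk₁' : Measurable fun z : Eucl d × Eucl d => (k₁ z.1 z.2 : ℝ≥0∞) :=
      hk₁.coe_nnreal_ennreal
    have hk₂' : Measurable fun z : Sph k × Sph k => (k₂ z.1 z.2 : ℝ≥0∞) :=
      hk₂.coe_nnreal_ennreal
    have hF : ∀ y₁ u₁ y₂ u₂, (ρ (y₁, u₁) : ℝ≥0∞) * (ρ (y₂, u₂) : ℝ≥0∞) *
        (g (y₁, u₁) (y₂, u₂) : ℝ≥0∞) =
        m⁻¹ ^ 2 * (a y₁ * b u₁) * ((a y₂ * k₁ y₁ y₂) * (b u₂ * k₂ u₁ u₂)) := by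
      intro y₁ u₁ y₂ u₂
      have h1 : (ρ (y₁, u₁) : ℝ≥0∞) * (ρ (y₂, u₂) : ℝ≥0∞) * (g (y₁, u₁) (y₂, u₂) : ℝ≥0∞) =
          (ρ (y₁, u₁) : ℝ≥0∞) * (ρ (y₂, u₂) : ℝ≥0∞) * (k₁ y₁ y₂ * k₂ u₁ u₂) := by
        by_cases h : ρ (y₁, u₁) * ρ (y₂, u₂) = 0
        · have : (ρ (y₁, u₁) : ℝ≥0∞) * (ρ (y₂, u₂) : ℝ≥0∞) = 0 := by exact_mod_cast h
          rw [this, zero_mul, zero_mul]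
        · rw [hgk _ _ _ _ (pos_iff_ne_zero.2 h), ENNReal.coe_mul]
      rw [h1, hρab, hρab]; ring
    -- the sections are measurable
    have hmy : ∀ y₁, Measurable fun y₂ => a y₂ * (k₁ y₁ y₂ : ℝ≥0∞) := fun y₁ =>
      ha.mul (hk₁'.comp measurable_prodMk_left)
    have hmu : ∀ u₁, Measurable fun u₂ => b u₂ * (k₂ u₁ u₂ : ℝ≥0∞) := fun u₁ =>
      hb.mul (hk₂'.comp measurable_prodMk_left)
    let H : Eucl d → ℝ≥0∞ := fun y₁ => ∫⁻ y₂ in W, a y₂ * (k₁ y₁ y₂ : ℝ≥0∞)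
    let K : Sph k → ℝ≥0∞ := fun u₁ => ∫⁻ u₂, b u₂ * (k₂ u₁ u₂ : ℝ≥0∞) ∂(sphMeasure k)
    have hH : Measurable H :=
      Measurable.lintegral_prod_right' (f := fun z : Eucl d × Eucl d => a z.2 * (k₁ z.1 z.2 : ℝ≥0∞))
        ((ha.comp measurable_snd).mul hk₁')
    have hK : Measurable K :=
      Measurable.lintegral_prod_right' (f := fun z : Sph k × Sph k => b z.2 * (k₂ z.1 z.2 : ℝ≥0∞))
        ((hb.comp measurable_snd).mul hk₂')
    let A : ℝ≥0∞ := ∫⁻ y in W, a y * H y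
    let B : ℝ≥0∞ := ∫⁻ u, b u * K u ∂(sphMeasure k)
    have hM : momN2 W ρ g = m⁻¹ ^ 2 * (A * B) := by
      have h1 : ∀ p : Eucl d × Sph k, (∫⁻ q, ((ρ p : ℝ≥0∞) * (ρ q : ℝ≥0∞) * (g p q : ℝ≥0∞))
          ∂(muW W k)) = m⁻¹ ^ 2 * ((a p.1 * H p.1) * (b p.2 * K p.2)) := by
        rintro ⟨y₁, u₁⟩
        have : ∀ q : Eucl d × Sph k,
            (ρ (y₁, u₁) : ℝ≥0∞) * (ρ q : ℝ≥0∞) * (g (y₁, u₁) q : ℝ≥0∞) =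
            m⁻¹ ^ 2 * (a y₁ * b u₁) * ((a q.1 * k₁ y₁ q.1) * (b q.2 * k₂ u₁ q.2)) :=
          fun q => hF y₁ u₁ q.1 q.2
        simp_rw [this]
        rw [lintegral_const_mul (f := fun q : Eucl d × Sph k =>
          (a q.1 * k₁ y₁ q.1) * (b q.2 * k₂ u₁ q.2)) _
          (((hmy y₁).comp measurable_fst).mul ((hmu u₁).comp measurable_snd)), muW,
          lintegral_prod_mul (hmy y₁).aemeasurable (hmu u₁).aemeasurable]
        change m⁻¹ ^ 2 * (a y₁ * b u₁) * (H y₁ * K u₁) = _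
        ring
      rw [momN2]
      simp_rw [h1]
      rw [lintegral_const_mul (f := fun p : Eucl d × Sph k =>
          (a p.1 * H p.1) * (b p.2 * K p.2)) _
          (((ha.mul hH).comp measurable_fst).mul ((hb.mul hK).comp measurable_snd)), muW]
      congr 1
      exact lintegral_prod_mul (ha.mul hH).aemeasurable (hb.mul hK).aemeasurable
    have hg1 : ∀ y₁ y₂, a y₁ ≠ 0 → a y₂ ≠ 0 → gfun1 ρ g y₁ y₂ = m⁻¹ ^ 2 * k₁ y₁ y₂ * B := by
      intro y₁ y₂ h1 h2
      have hne : a y₁ * a y₂ ≠ 0 := mul_ne_zero h1 h2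
      have hnt : a y₁ * a y₂ ≠ ⊤ := ENNReal.mul_ne_top (hat _) (hat _)
      rw [gfun1, if_pos (pos_iff_ne_zero.2 hne)]
      rw [eq_comm, ENNReal.eq_div_iff hne hnt, eq_comm]
      simp_rw [hF]
      have e : ∀ u₁, (∫⁻ u₂, m⁻¹ ^ 2 * (a y₁ * b u₁) *
          ((a y₂ * k₁ y₁ y₂) * (b u₂ * k₂ u₁ u₂)) ∂(sphMeasure k)) =
          (m⁻¹ ^ 2 * a y₁ * a y₂ * k₁ y₁ y₂) * (b u₁ * K u₁) := by
        intro u₁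
        rw [lintegral_const_mul _ ((hmu u₁).const_mul _), lintegral_const_mul _ (hmu u₁)]
        change m⁻¹ ^ 2 * (a y₁ * b u₁) * (a y₂ * k₁ y₁ y₂ * K u₁) = _
        ring
      simp_rw [e]
      rw [lintegral_const_mul (f := fun u => b u * K u) _ (hb.mul hK)]
      change m⁻¹ ^ 2 * a y₁ * a y₂ * k₁ y₁ y₂ * B = _
      ring
    have hg2 : ∀ u₁ u₂, b u₁ ≠ 0 → b u₂ ≠ 0 → gfun2 W ρ g u₁ u₂ = m⁻¹ ^ 2 * k₂ u₁ u₂ * A := by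
      intro u₁ u₂ h1 h2
      have hne : b u₁ * b u₂ ≠ 0 := mul_ne_zero h1 h2
      have hnt : b u₁ * b u₂ ≠ ⊤ := ENNReal.mul_ne_top (hbt _) (hbt _)
      rw [gfun2, if_pos (pos_iff_ne_zero.2 hne)]
      rw [eq_comm, ENNReal.eq_div_iff hne hnt, eq_comm]
      simp_rw [hF]
      have e : ∀ y₁, (∫⁻ y₂ in W, m⁻¹ ^ 2 * (a y₁ * b u₁) *
          ((a y₂ * k₁ y₁ y₂) * (b u₂ * k₂ u₁ u₂))) =
          (m⁻¹ ^ 2 * b u₁ * b u₂ * k₂ u₁ u₂) * (a y₁ * H y₁) := by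
        intro y₁
        rw [lintegral_const_mul _ ((hmy y₁).mul_const _), lintegral_mul_const _ (hmy y₁)]
        change m⁻¹ ^ 2 * (a y₁ * b u₁) * (H y₁ * (b u₂ * k₂ u₁ u₂)) = _
        ring
      simp_rw [e]
      rw [lintegral_const_mul (f := fun y => a y * H y) _ (ha.mul hH)]
      change m⁻¹ ^ 2 * b u₁ * b u₂ * k₂ u₁ u₂ * A = _
      ring
    intro y₁ y₂ u₁ u₂ hpos
    have hab : ∀ y u, ρ (y, u) ≠ 0 → a y ≠ 0 ∧ b u ≠ 0 := by
      intro y u h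
      have h' : (ρ (y, u) : ℝ≥0∞) ≠ 0 := by exact_mod_cast h
      rw [hρab] at h'
      exact mul_ne_zero_iff.1 (mul_ne_zero_iff.1 h').2
    have hp := mul_ne_zero_iff.1 hpos.ne'
    obtain ⟨a1, b1⟩ := hab _ _ hp.1
    obtain ⟨a2, b2⟩ := hab _ _ hp.2
    rw [hg1 _ _ a1 a2, hg2 _ _ b1 b2, hgk _ _ _ _ hpos, betaC, ← hm, ENNReal.coe_mul,
      ENNReal.div_eq_inv_mul]
    set M := momN2 W ρ g
    calc (k₁ y₁ y₂ : ℝ≥0∞) * k₂ u₁ u₂ = (M⁻¹ * M) * (m * m⁻¹) ^ 2 * (k₁ y₁ y₂ * k₂ u₁ u₂) := by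
          rw [ENNReal.inv_mul_cancel hN2₀.ne' hN2₁.ne, ENNReal.mul_inv_cancel hm0 hmt]; simp
      _ = (M⁻¹ * (m⁻¹ ^ 2 * (A * B))) * (m * m⁻¹) ^ 2 * (k₁ y₁ y₂ * k₂ u₁ u₂) := by rw [← hM]
      _ = _ := by ring
  · intro h
    have hm1 : Measurable fun z : Eucl d × Eucl d => gfun1 ρ g z.1 z.2 := by
      have hd1 : Measurable fun z : Eucl d × Eucl d => rho1 ρ z.1 * rho1 ρ z.2 :=
        (ha.comp measurable_fst).mul (ha.comp measurable_snd)
      have hn1 : Measurable fun z : Eucl d × Eucl d =>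
          ∫⁻ u₁, (∫⁻ u₂, ((ρ (z.1, u₁) : ℝ≥0∞) * (ρ (z.2, u₂) : ℝ≥0∞) *
            (g (z.1, u₁) (z.2, u₂) : ℝ≥0∞)) ∂(sphMeasure k)) ∂(sphMeasure k) := by
        refine Measurable.lintegral_prod_right' (f := fun w : (Eucl d × Eucl d) × Sph k =>
          ∫⁻ u₂, ((ρ (w.1.1, w.2) : ℝ≥0∞) * (ρ (w.1.2, u₂) : ℝ≥0∞) *
            (g (w.1.1, w.2) (w.1.2, u₂) : ℝ≥0∞)) ∂(sphMeasure k)) ?_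
        refine Measurable.lintegral_prod_right'
          (f := fun w : ((Eucl d × Eucl d) × Sph k) × Sph k =>
          ((ρ (w.1.1.1, w.1.2) : ℝ≥0∞) * (ρ (w.1.1.2, w.2) : ℝ≥0∞) *
            (g (w.1.1.1, w.1.2) (w.1.1.2, w.2) : ℝ≥0∞))) ?_
        exact hG.comp (g := fun r : (Eucl d × Sph k) × (Eucl d × Sph k) =>
          (ρ r.1 : ℝ≥0∞) * (ρ r.2 : ℝ≥0∞) * (g r.1 r.2 : ℝ≥0∞))
          (f := fun w : ((Eucl d × Eucl d) × Sph k) × Sph k =>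
            ((w.1.1.1, w.1.2), (w.1.1.2, w.2))) (by fun_prop)
      exact Measurable.ite (measurableSet_lt measurable_const hd1) (hn1.div hd1) measurable_const
    have hm2 : Measurable fun z : Sph k × Sph k => gfun2 W ρ g z.1 z.2 := by
      have hd1 : Measurable fun z : Sph k × Sph k => rho2 W ρ z.1 * rho2 W ρ z.2 :=
        (hb.comp measurable_fst).mul (hb.comp measurable_snd)
      have hn1 : Measurable fun z : Sph k × Sph k =>
          ∫⁻ y₁ in W, ∫⁻ y₂ in W, ((ρ (y₁, z.1) : ℝ≥0∞) * (ρ (y₂, z.2) : ℝ≥0∞) *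
            (g (y₁, z.1) (y₂, z.2) : ℝ≥0∞)) := by
        refine Measurable.lintegral_prod_right' (f := fun w : (Sph k × Sph k) × Eucl d =>
          ∫⁻ y₂ in W, ((ρ (w.2, w.1.1) : ℝ≥0∞) * (ρ (y₂, w.1.2) : ℝ≥0∞) *
            (g (w.2, w.1.1) (y₂, w.1.2) : ℝ≥0∞))) ?_
        refine Measurable.lintegral_prod_right'
          (f := fun w : ((Sph k × Sph k) × Eucl d) × Eucl d =>
          ((ρ (w.1.2, w.1.1.1) : ℝ≥0∞) * (ρ (w.2, w.1.1.2) : ℝ≥0∞) *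
            (g (w.1.2, w.1.1.1) (w.2, w.1.1.2) : ℝ≥0∞))) ?_
        exact hG.comp (g := fun r : (Eucl d × Sph k) × (Eucl d × Sph k) =>
          (ρ r.1 : ℝ≥0∞) * (ρ r.2 : ℝ≥0∞) * (g r.1 r.2 : ℝ≥0∞))
          (f := fun w : ((Sph k × Sph k) × Eucl d) × Eucl d =>
            ((w.1.2, w.1.1.1), (w.2, w.1.1.2))) (by fun_prop)
      exact Measurable.ite (measurableSet_lt measurable_const hd1) (hn1.div hd1) measurable_const
    refine ⟨fun y₁ y₂ => (betaC W ρ g * gfun1 ρ g y₁ y₂).toNNReal,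
      fun u₁ u₂ => (gfun2 W ρ g u₁ u₂).toNNReal, (hm1.const_mul _).ennreal_toNNReal,
      hm2.ennreal_toNNReal, ?_⟩
    intro y₁ y₂ u₁ u₂ hpos
    have := congrArg ENNReal.toNNReal (h y₁ y₂ u₁ u₂ hpos)
    rwa [ENNReal.toNNReal_coe, ENNReal.toNNReal_mul] at this
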